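/- arXiv:math/0504455 — 2 statements merged into one kernel-verified Lean document; each statement's English description precedes it below -/
import Mathlib

section
/- For all M, A, P > 0 there exist T', C₁, C₂ > 0, depending only on M, A and P, with the following property. Let T, L > 0; let a : ℝ × ℝ × ℝ × [0,T] → ℝ be continuous and positive, periodic in its third (spatial) argument with period L (a(p,q,x+L,t) = a(p,q,x,t)), and satisfy a(p,q,x,t)·p² ≥ A whenever |p| ≥ P; let b : ℝ → ℝ be continuous; and let u : ℝ × [0,T) → ℝ be continuous, with continuous partial derivatives u_t, u_x, u_{xx} on ℝ × (0,T), satisfying u_t = a(u_x,u,x,t)·u_{xx} + b(u_x), spatially periodic with period L, and with osc_{x ∈ ℝ} u(x,t) ≤ M for every t. Then for every x ∈ ℝ and every t ∈ (0, min(T,T')): |u_x(x,t)| ≤ C₁·√t·(1+t)·exp(C₂/t). -/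
/-!
The argument is Kružkov's doubling of the space variable. Fix a barrier `ψ(z, t)`, increasing and
convex in `z` with `ψ(0, t) = 0`, and consider `W(x, y, t) = y - x - ψ(u(y, t) - u(x, t), t)` on
`x ≤ y`. If `W` becomes negative, it has a negative minimum at some `x < y`. There the first-order
conditions give `ψ_z u_x = 1` at both points, so the two gradients agree and are large, the terms
`b(u_x)` cancel, and the second-order and time conditions combine to
`ψ_t ≥ (a_x + a_y) u_x² ψ_zz ≥ 2 A ψ_zz`, where `a_x` and `a_y` are the two values of `a`. A barrier
with `ψ_t < 2 A ψ_zz` therefore keeps `W` nonnegative, and letting `y ↓ x` gives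
`ψ_z(0, t) u_x ≤ 1`. A barrier tending to `0` as `t ↓ 0` makes `W` asymptotically nonnegative at the
initial time whatever the initial gradient is, and `ψ(z, t) = exp((α z - β) / t) - exp(-β / t)` is
such a barrier.
-/

open Set Filter Topology

section Calculus

lemma second_deriv_nonneg_of_isLocalMin {f f' : ℝ → ℝ} {c x : ℝ} (hmin : IsLocalMin f x)
    (hf : ∀ᶠ y in 𝓝 x, HasDerivAt f (f' y) y) (hf' : HasDerivAt f' c x) : 0 ≤ c := by
  by_contra! hc
  have hderiv : deriv f =ᶠ[𝓝 x] f' := hf.mono fun y hy => hy.deriv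
  have hderiv₂ : deriv (deriv f) x = c := hderiv.deriv_eq.trans hf'.deriv
  have hmax : IsLocalMax f x :=
    isLocalMax_of_deriv_deriv_neg (hderiv₂ ▸ hc) hmin.deriv_eq_zero hf.self_of_nhds.continuousAt
  have hconst : f =ᶠ[𝓝 x] fun _ => f x := by
    filter_upwards [hmin, hmax] with y h₁ h₂ using le_antisymm h₂ h₁
  have hzero : deriv (deriv f) x = 0 := by simpa using hconst.deriv.deriv_eq
  exact hc.ne (hderiv₂.symm.trans hzero)

lemma deriv_nonpos_of_isLocalMinOn_Iic {f : ℝ → ℝ} {c x : ℝ} (hmin : IsLocalMinOn f (Iic x) x)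
    (hf : HasDerivWithinAt f c (Iic x) x) : c ≤ 0 := by
  have hcone : (-1 : ℝ) ∈ posTangentConeAt (Iic x) x :=
    mem_posTangentConeAt_of_segment_subset
      ((convex_Iic x).segment_subset self_mem_Iic (by simp))
  simpa using hmin.hasFDerivWithinAt_nonneg hf.hasFDerivWithinAt hcone

lemma deriv_nonneg_of_isLocalMinOn_Ici {f : ℝ → ℝ} {c x : ℝ} (hmin : IsLocalMinOn f (Ici x) x)
    (hf : HasDerivWithinAt f c (Ici x) x) : 0 ≤ c := by
  have hcone : (1 : ℝ) ∈ posTangentConeAt (Ici x) x :=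
    mem_posTangentConeAt_of_segment_subset
      ((convex_Ici x).segment_subset self_mem_Ici (by simp))
  simpa using hmin.hasFDerivWithinAt_nonneg hf.hasFDerivWithinAt hcone

lemma tendsto_exp_neg_div_nhdsGT_zero {c : ℝ} (hc : 0 < c) :
    Tendsto (fun t => Real.exp (-c / t)) (𝓝[>] 0) (𝓝 0) := by
  simp only [div_eq_mul_inv]
  exact Real.tendsto_exp_atBot.comp
    (tendsto_inv_nhdsGT_zero.const_mul_atTop_of_neg (neg_lt_zero.2 hc))

lemma le_sqrt_mul_one_add {t : ℝ} (ht : 0 ≤ t) : t ≤ √t * (1 + t) := by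
  have hsqrt : √t ≤ 1 + t := Real.sqrt_le_iff.2 ⟨by positivity, by nlinarith⟩
  calc t = √t * √t := (Real.mul_self_sqrt ht).symm
    _ ≤ √t * (1 + t) := by gcongr

end Calculus

section FirstContact

lemma exists_isMinOn_univ_prod_of_periodic {X Y : Type*} [TopologicalSpace X] [LinearOrder Y]
    [TopologicalSpace Y] [ClosedIicTopology Y] {K : Set X} (hK : IsCompact K) (hne : K.Nonempty)
    {L : ℝ} (hL : 0 < L) {F : ℝ × X → Y} (hF : ContinuousOn F (univ ×ˢ K))
    (hper : ∀ k ∈ K, Function.Periodic (fun x => F (x, k)) L) :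
    ∃ z ∈ univ ×ˢ K, IsMinOn F (univ ×ˢ K) z := by
  obtain ⟨z, hz, hmin⟩ := (isCompact_Icc (a := 0) (b := L)).prod hK |>.exists_isMinOn
    ((nonempty_Icc.2 hL.le).prod hne) (hF.mono (prod_mono_left (subset_univ _)))
  refine ⟨z, ⟨trivial, hz.2⟩, fun ⟨x, k⟩ hk => ?_⟩
  obtain ⟨x', hx', heq⟩ := (hper k hk.2).exists_mem_Ico₀ hL x
  exact (hmin ⟨Ico_subset_Icc_self hx', hk.2⟩ : F z ≤ F (x', k)).trans_eq heq.symm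

lemma exists_forall_le_of_diagonal_periodic {X : Type*} [TopologicalSpace X] {K : Set X}
    (hK : IsCompact K) (hne : K.Nonempty) {L R : ℝ} (hL : 0 < L) (hR : 0 ≤ R) {W : ℝ → ℝ → X → ℝ}
    (hW : ContinuousOn (fun z : ℝ × ℝ × X => W z.1 z.2.1 z.2.2) (univ ×ˢ univ ×ˢ K))
    (hper : ∀ x y, ∀ k ∈ K, W (x + L) (y + L) k = W x y k) :
    ∃ x y, ∃ k ∈ K, x ≤ y ∧ y - x ≤ R ∧
      ∀ x' y', ∀ k' ∈ K, x' ≤ y' → y' - x' ≤ R → W x y k ≤ W x' y' k' := by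
  -- In the coordinates `(x, y - x, k)` the period acts on the first one only.
  obtain ⟨⟨x, r, k⟩, ⟨-, hr, hk⟩, hmin⟩ := exists_isMinOn_univ_prod_of_periodic
    ((isCompact_Icc (a := 0) (b := R)).prod hK) ((nonempty_Icc.2 hR).prod hne) hL
    (F := fun z => W z.1 (z.1 + z.2.1) z.2.2)
    (hW.comp (f := fun z : ℝ × ℝ × X => (z.1, z.1 + z.2.1, z.2.2)) (by fun_prop)
      fun z hz => ⟨trivial, trivial, hz.2.2⟩)
    (fun k hk x => by simpa only [add_right_comm] using hper x (x + k.1) k.2 hk.2)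
  refine ⟨x, x + r, k, hk, le_add_of_nonneg_right hr.1, (add_sub_cancel_left x r).trans_le hr.2,
    fun x' y' k' hk' hle hR' => ?_⟩
  simpa using isMinOn_iff.1 hmin (x', y' - x', k') ⟨trivial, ⟨sub_nonneg.2 hle, hR'⟩, hk'⟩

lemma exists_negative_contact {W : ℝ → ℝ → ℝ → ℝ} {g : ℝ → ℝ} {L τ x₀ y₀ : ℝ} (hL : 0 < L)
    (hτ : 0 < τ)
    (hW : ContinuousOn (fun z : ℝ × ℝ × ℝ => W z.1 z.2.1 z.2.2) (univ ×ˢ univ ×ˢ Ioc 0 τ))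
    (hper : ∀ x y, ∀ t ∈ Ioc 0 τ, W (x + L) (y + L) t = W x y t)
    (hdiag : ∀ x, ∀ t ∈ Ioc 0 τ, 0 ≤ W x x t)
    (hlower : ∀ x y, ∀ t ∈ Ioc 0 τ, y - x - g t ≤ W x y t)
    (hg : ContinuousOn g (Ioc 0 τ)) (hg₀ : Tendsto g (𝓝[>] 0) (𝓝 0))
    (hxy : x₀ ≤ y₀) (hneg : W x₀ y₀ τ < 0) :
    ∃ x y, ∃ t ∈ Ioc 0 τ, x < y ∧ W x y t < 0 ∧ IsLocalMin (fun w => W x w t) y ∧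
      IsLocalMin (fun w => W w y t) x ∧ IsLocalMinOn (fun s => W x y s) (Iic t) t := by
  obtain ⟨d, hgd, hd, hdτ⟩ : ∃ d, g d < -W x₀ y₀ τ ∧ d ∈ Ioo 0 τ :=
    ((hg₀.eventually_lt_const (neg_pos.2 hneg)).and (Ioo_mem_nhdsGT hτ)).exists
  have hsub : Icc d τ ⊆ Ioc 0 τ := fun t ht => ⟨hd.trans_le ht.1, ht.2⟩
  have hτmem : τ ∈ Icc d τ := ⟨hdτ.le, le_rfl⟩
  obtain ⟨R, hR⟩ := isCompact_Icc.bddAbove_image (hg.mono hsub)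
  have hgR : ∀ t ∈ Icc d τ, g t ≤ R := fun t ht => hR (mem_image_of_mem g ht)
  have hr₀R : y₀ - x₀ ≤ R := by
    linarith [hlower x₀ y₀ τ (hsub hτmem), hgR τ hτmem]
  obtain ⟨x, y, t, ht, hle, hyR, hmin⟩ := exists_forall_le_of_diagonal_periodic isCompact_Icc
    ⟨τ, hτmem⟩ hL ((sub_nonneg.2 hxy).trans hr₀R)
    (hW.mono (prod_mono_right (prod_mono_right hsub))) fun x y t ht => hper x y t (hsub ht)
  have hval : W x y t ≤ W x₀ y₀ τ := hmin x₀ y₀ τ hτmem hxy hr₀R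
  have hlow := hlower x y t (hsub ht)
  have hlt : x < y := hle.lt_of_ne fun h => by
    subst h
    linarith [hdiag x t (hsub ht)]
  have hyR_lt : y - x < R := by linarith [hgR t ht]
  have hdt : d < t := ht.1.lt_of_ne fun h => by
    subst h
    linarith
  refine ⟨x, y, t, hsub ht, hlt, hval.trans_lt hneg, ?_, ?_, ?_⟩
  · filter_upwards [Ioo_mem_nhds hlt (show y < x + R by linarith)]
      with w hw using hmin x w t ht hw.1.le (by linarith [hw.2])
  · filter_upwards [Ioo_mem_nhds (show y - R < x by linarith) hlt]
      with w hw using hmin w y t ht hw.2.le (by linarith [hw.1])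
  · filter_upwards [Icc_mem_nhdsLE hdt]
      with s hs using hmin x y s ⟨hs.1, hs.2.trans ht.2⟩ hle hyR

end FirstContact

/-- `u` is a classical solution of `u_t = a(u_x, u, x, t) u_xx + b(u_x, t)` on `ℝ × (0, T)`, where
`ut`, `ux` and `uxx` are its partial derivatives, carried as functions. Time is the last argument of
`u`, and `t = 0` is excluded. -/
structure IsClassicalSolution (a : ℝ → ℝ → ℝ → ℝ → ℝ) (b : ℝ → ℝ → ℝ) (T : ℝ)
    (u ut ux uxx : ℝ → ℝ → ℝ) : Prop where
  continuousOn : ContinuousOn (fun z : ℝ × ℝ => u z.1 z.2) (univ ×ˢ Ioo 0 T)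
  hasDerivAt_time : ∀ x, ∀ t ∈ Ioo 0 T, HasDerivAt (fun s => u x s) (ut x t) t
  hasDerivAt_space : ∀ x, ∀ t ∈ Ioo 0 T, HasDerivAt (fun y => u y t) (ux x t) x
  hasDerivAt_space_space : ∀ x, ∀ t ∈ Ioo 0 T, HasDerivAt (fun y => ux y t) (uxx x t) x
  equation : ∀ x, ∀ t ∈ Ioo 0 T, ut x t = a (ux x t) (u x t) x t * uxx x t + b (ux x t) t

lemma IsClassicalSolution.neg {a : ℝ → ℝ → ℝ → ℝ → ℝ} {b : ℝ → ℝ → ℝ} {T : ℝ}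
    {u ut ux uxx : ℝ → ℝ → ℝ} (hu : IsClassicalSolution a b T u ut ux uxx) :
    IsClassicalSolution (fun p q x t => a (-p) (-q) x t) (fun p t => -b (-p) t) T
      (fun x t => -u x t) (fun x t => -ut x t) (fun x t => -ux x t) (fun x t => -uxx x t) where
  continuousOn := hu.continuousOn.neg
  hasDerivAt_time x t ht := (hu.hasDerivAt_time x t ht).neg
  hasDerivAt_space x t ht := (hu.hasDerivAt_space x t ht).neg
  hasDerivAt_space_space x t ht := (hu.hasDerivAt_space_space x t ht).neg
  equation x t ht := by
    simp only [neg_neg]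
    rw [hu.equation x t ht]
    ring

/-- The two-point function `W(x, y, t) = y - x - ψ(u(y, t) - u(x, t), t)`. -/
def twoPoint (ψ u : ℝ → ℝ → ℝ) (x y t : ℝ) : ℝ :=
  y - x - ψ (u y t - u x t) t

/-- A barrier on `0 < t ≤ τ` for two-point comparison of solutions with spatial oscillation at most
`M`, whose diffusion satisfies `a p² ≥ A` for `|p| ≥ P`. The functions `ψz`, `ψzz` and `ψt` are the
partial derivatives of `ψ`. Since `ψz u_x = 1` at a contact point, `slope_mul_le_one` says `u_x ≥ P`
there. -/
structure IsTwoPointBarrier (A M P τ : ℝ) (ψ ψz ψzz ψt : ℝ → ℝ → ℝ) : Prop where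
  hasFDerivAt : ∀ z, ∀ t ∈ Ioc 0 τ, HasFDerivAt (fun q : ℝ × ℝ => ψ q.1 q.2)
    (ψz z t • ContinuousLinearMap.fst ℝ ℝ ℝ + ψt z t • ContinuousLinearMap.snd ℝ ℝ ℝ) (z, t)
  hasDerivAt_slope : ∀ z, ∀ t ∈ Ioc 0 τ, HasDerivAt (fun z => ψz z t) (ψzz z t) z
  map_zero : ∀ t ∈ Ioc 0 τ, ψ 0 t = 0
  slope_pos : ∀ z, ∀ t ∈ Ioc 0 τ, 0 < ψz z t
  slope_mul_le_one : ∀ z ∈ Ioc 0 M, ∀ t ∈ Ioc 0 τ, ψz z t * P ≤ 1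
  second_deriv_nonneg : ∀ z ∈ Ioc 0 M, ∀ t ∈ Ioc 0 τ, 0 ≤ ψzz z t
  time_deriv_lt : ∀ z ∈ Ioc 0 M, ∀ t ∈ Ioc 0 τ, ψt z t < 2 * A * ψzz z t
  tendsto_zero : Tendsto (fun t => ψ M t) (𝓝[>] 0) (𝓝 0)

namespace IsTwoPointBarrier

variable {A M P τ T L : ℝ} {ψ ψz ψzz ψt : ℝ → ℝ → ℝ}
  {a : ℝ → ℝ → ℝ → ℝ → ℝ} {b : ℝ → ℝ → ℝ} {u ut ux uxx : ℝ → ℝ → ℝ} {x y t : ℝ}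

lemma hasDerivAt_comp (hψ : IsTwoPointBarrier A M P τ ψ ψz ψzz ψt) {f g : ℝ → ℝ} {f' g' s : ℝ}
    (hs : g s ∈ Ioc 0 τ) (hf : HasDerivAt f f' s) (hg : HasDerivAt g g' s) :
    HasDerivAt (fun s => ψ (f s) (g s)) (ψz (f s) (g s) * f' + ψt (f s) (g s) * g') s := by
  refine ((hψ.hasFDerivAt (f s) (g s) hs).comp_hasDerivAt s (hf.prodMk hg)).congr_deriv ?_
  simp

lemma continuousOn (hψ : IsTwoPointBarrier A M P τ ψ ψz ψzz ψt) :
    ContinuousOn (fun q : ℝ × ℝ => ψ q.1 q.2) (univ ×ˢ Ioc 0 τ) := fun q hq =>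
  (hψ.hasFDerivAt q.1 q.2 hq.2).continuousAt.continuousWithinAt

lemma continuousOn_twoPoint (hψ : IsTwoPointBarrier A M P τ ψ ψz ψzz ψt)
    (hu : ContinuousOn (fun z : ℝ × ℝ => u z.1 z.2) (univ ×ˢ Ioc 0 τ)) :
    ContinuousOn (fun z : ℝ × ℝ × ℝ => twoPoint ψ u z.1 z.2.1 z.2.2)
      (univ ×ˢ univ ×ˢ Ioc 0 τ) := by
  have hux : ContinuousOn (fun z : ℝ × ℝ × ℝ => u z.1 z.2.2) (univ ×ˢ univ ×ˢ Ioc 0 τ) :=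
    hu.comp (f := fun z : ℝ × ℝ × ℝ => (z.1, z.2.2)) (by fun_prop) fun z hz => ⟨trivial, hz.2.2⟩
  have huy : ContinuousOn (fun z : ℝ × ℝ × ℝ => u z.2.1 z.2.2) (univ ×ˢ univ ×ˢ Ioc 0 τ) :=
    hu.comp (f := fun z : ℝ × ℝ × ℝ => (z.2.1, z.2.2)) (by fun_prop) fun z hz => ⟨trivial, hz.2.2⟩
  exact ContinuousOn.sub (by fun_prop) (hψ.continuousOn.comp
    ((huy.sub hux).prodMk (by fun_prop : ContinuousOn (fun z : ℝ × ℝ × ℝ => z.2.2) _))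
    fun z hz => ⟨trivial, hz.2.2⟩)

lemma strictMono (hψ : IsTwoPointBarrier A M P τ ψ ψz ψzz ψt) (ht : t ∈ Ioc 0 τ) :
    StrictMono fun z => ψ z t := by
  refine strictMono_of_hasDerivAt_pos (f' := fun z => ψz z t) (fun z => ?_)
    fun z => hψ.slope_pos z t ht
  simpa using hψ.hasDerivAt_comp ht (hasDerivAt_id z) (hasDerivAt_const z t)

section Derivatives

variable (hψ : IsTwoPointBarrier A M P τ ψ ψz ψzz ψt) (ht : t ∈ Ioc 0 τ)
include hψ ht

lemma hasDerivAt_twoPoint_right {p : ℝ} (hu : HasDerivAt (fun w => u w t) p y) :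
    HasDerivAt (fun w => twoPoint ψ u x w t) (1 - ψz (u y t - u x t) t * p) y := by
  refine (((hasDerivAt_id y).sub_const x).sub
    (hψ.hasDerivAt_comp ht (hu.sub_const (u x t)) (hasDerivAt_const y t))).congr_deriv ?_
  ring

lemma hasDerivAt_twoPoint_left {p : ℝ} (hu : HasDerivAt (fun w => u w t) p x) :
    HasDerivAt (fun w => twoPoint ψ u w y t) (ψz (u y t - u x t) t * p - 1) x := by
  refine (((hasDerivAt_id x).const_sub y).sub
    (hψ.hasDerivAt_comp ht (hu.const_sub (u y t)) (hasDerivAt_const x t))).congr_deriv ?_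
  ring

lemma hasDerivAt_twoPoint_time {v w : ℝ} (hv : HasDerivAt (fun s => u y s) v t)
    (hw : HasDerivAt (fun s => u x s) w t) :
    HasDerivAt (fun s => twoPoint ψ u x y s)
      (-(ψz (u y t - u x t) t * (v - w) + ψt (u y t - u x t) t)) t := by
  refine ((hψ.hasDerivAt_comp ht (hv.sub hw) (hasDerivAt_id t)).const_sub (y - x)).congr_deriv ?_
  simp only [id, Pi.sub_apply, mul_one]

lemma slope_mul_deriv_eq_one_right {p : ℝ} (hu : HasDerivAt (fun w => u w t) p y)
    (hmin : IsLocalMin (fun w => twoPoint ψ u x w t) y) : ψz (u y t - u x t) t * p = 1 :=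
  (sub_eq_zero.1 (hmin.hasDerivAt_eq_zero (hψ.hasDerivAt_twoPoint_right ht hu))).symm

lemma slope_mul_deriv_eq_one_left {p : ℝ} (hu : HasDerivAt (fun w => u w t) p x)
    (hmin : IsLocalMin (fun w => twoPoint ψ u w y t) x) : ψz (u y t - u x t) t * p = 1 :=
  sub_eq_zero.1 (hmin.hasDerivAt_eq_zero (hψ.hasDerivAt_twoPoint_left ht hu))

lemma second_order_condition_right {p : ℝ → ℝ} {q : ℝ}
    (hu : ∀ᶠ w in 𝓝 y, HasDerivAt (fun w => u w t) (p w) w) (hp : HasDerivAt p q y)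
    (hmin : IsLocalMin (fun w => twoPoint ψ u x w t) y) :
    ψzz (u y t - u x t) t * p y ^ 2 + ψz (u y t - u x t) t * q ≤ 0 := by
  have hslope : HasDerivAt (fun w => ψz (u w t - u x t) t) (ψzz (u y t - u x t) t * p y) y :=
    (hψ.hasDerivAt_slope _ t ht).comp y (hu.self_of_nhds.sub_const (u x t))
  have hsecond := second_deriv_nonneg_of_isLocalMin hmin
    (hu.mono fun w hw => hψ.hasDerivAt_twoPoint_right ht hw) ((hslope.mul hp).const_sub 1)
  linarith

lemma second_order_condition_left {p : ℝ → ℝ} {q : ℝ}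
    (hu : ∀ᶠ w in 𝓝 x, HasDerivAt (fun w => u w t) (p w) w) (hp : HasDerivAt p q x)
    (hmin : IsLocalMin (fun w => twoPoint ψ u w y t) x) :
    ψzz (u y t - u x t) t * p x ^ 2 ≤ ψz (u y t - u x t) t * q := by
  have hslope : HasDerivAt (fun w => ψz (u y t - u w t) t) (ψzz (u y t - u x t) t * -p x) x :=
    (hψ.hasDerivAt_slope _ t ht).comp x (hu.self_of_nhds.const_sub (u y t))
  have hsecond := second_deriv_nonneg_of_isLocalMin hmin
    (hu.mono fun w hw => hψ.hasDerivAt_twoPoint_left ht hw) ((hslope.mul hp).sub_const 1)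
  linarith

lemma time_deriv_nonneg {v w : ℝ} (hv : HasDerivAt (fun s => u y s) v t)
    (hw : HasDerivAt (fun s => u x s) w t)
    (hmin : IsLocalMinOn (fun s => twoPoint ψ u x y s) (Iic t) t) :
    0 ≤ ψz (u y t - u x t) t * (v - w) + ψt (u y t - u x t) t :=
  neg_nonpos.1 (deriv_nonpos_of_isLocalMinOn_Iic hmin
    (hψ.hasDerivAt_twoPoint_time ht hv hw).hasDerivWithinAt)

end Derivatives

lemma not_contact (hψ : IsTwoPointBarrier A M P τ ψ ψz ψzz ψt) (hA : 0 ≤ A)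
    (hu : IsClassicalSolution a b T u ut ux uxx) (htτ : t ∈ Ioc 0 τ) (ht : t ∈ Ioo 0 T)
    (ha : ∀ p q x, P ≤ |p| → A ≤ a p q x t * p ^ 2) (hz : u y t - u x t ∈ Ioc 0 M)
    (hminy : IsLocalMin (fun w => twoPoint ψ u x w t) y)
    (hminx : IsLocalMin (fun w => twoPoint ψ u w y t) x)
    (hmint : IsLocalMinOn (fun s => twoPoint ψ u x y s) (Iic t) t) : False := by
  have hux := fun w => hu.hasDerivAt_space w t ht
  have hslopey := hψ.slope_mul_deriv_eq_one_right htτ (hux y) hminy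
  have hslopex := hψ.slope_mul_deriv_eq_one_left htτ (hux x) hminx
  have hyy := hψ.second_order_condition_right htτ (.of_forall hux)
    (hu.hasDerivAt_space_space y t ht) hminy
  have hxx := hψ.second_order_condition_left htτ (.of_forall hux)
    (hu.hasDerivAt_space_space x t ht) hminx
  have htime := hψ.time_deriv_nonneg htτ (hu.hasDerivAt_time y t ht) (hu.hasDerivAt_time x t ht)
    hmint
  have hstrict := hψ.time_deriv_lt _ hz t htτ
  have hconvex := hψ.second_deriv_nonneg _ hz t htτ
  have hsteep := hψ.slope_mul_le_one _ hz t htτ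
  have hpos := hψ.slope_pos (u y t - u x t) t htτ
  have hp_eq : ux x t = ux y t := mul_left_cancel₀ hpos.ne' (hslopex.trans hslopey.symm)
  rw [hu.equation y t ht, hu.equation x t ht, hp_eq] at htime
  rw [hp_eq] at hxx
  set p := ux y t
  set S := ψz (u y t - u x t) t
  set C := ψzz (u y t - u x t) t
  have hp : 0 < p := pos_of_mul_pos_right (hslopey ▸ one_pos) hpos.le
  have hPp : P ≤ |p| :=
    (le_of_mul_le_mul_left (hsteep.trans_eq hslopey.symm) hpos).trans (le_abs_self p)
  have ha_nonneg : ∀ q x, 0 ≤ a p q x t := fun q x =>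
    nonneg_of_mul_nonneg_left (hA.trans (ha p q x hPp)) (pow_pos hp 2)
  have hyy' : a p (u y t) y t * (S * uxx y t) ≤ -(A * C) :=
    calc a p (u y t) y t * (S * uxx y t) ≤ a p (u y t) y t * -(C * p ^ 2) :=
          mul_le_mul_of_nonneg_left (by linarith) (ha_nonneg _ _)
      _ = -(a p (u y t) y t * p ^ 2 * C) := by ring
      _ ≤ -(A * C) := neg_le_neg (mul_le_mul_of_nonneg_right (ha p _ _ hPp) hconvex)
  have hxx' : A * C ≤ a p (u x t) x t * (S * uxx x t) :=
    calc A * C ≤ a p (u x t) x t * p ^ 2 * C :=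
          mul_le_mul_of_nonneg_right (ha p _ _ hPp) hconvex
      _ = a p (u x t) x t * (C * p ^ 2) := by ring
      _ ≤ a p (u x t) x t * (S * uxx x t) := mul_le_mul_of_nonneg_left hxx (ha_nonneg _ _)
  linarith

theorem twoPoint_nonneg (hψ : IsTwoPointBarrier A M P τ ψ ψz ψzz ψt) (hA : 0 ≤ A) (hL : 0 < L)
    (hu : IsClassicalSolution a b T u ut ux uxx)
    (ha : ∀ p q x, ∀ t ∈ Ioo 0 T, P ≤ |p| → A ≤ a p q x t * p ^ 2)
    (hper : ∀ t ∈ Ioo 0 T, Function.Periodic (fun x => u x t) L)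
    (hosc : ∀ t ∈ Ioo 0 T, ∀ x y, u x t - u y t ≤ M) (hτ : τ ∈ Ioo 0 T) (hxy : x ≤ y) :
    0 ≤ twoPoint ψ u x y τ := by
  by_contra! hneg
  have hsub : Ioc 0 τ ⊆ Ioo 0 T := fun t ht => ⟨ht.1, ht.2.trans_lt hτ.2⟩
  obtain ⟨x', y', t, ht, hxy', hW, hminy, hminx, hmint⟩ :=
    exists_negative_contact (g := fun t => ψ M t) hL hτ.1
      (hψ.continuousOn_twoPoint (hu.continuousOn.mono (prod_mono_right hsub)))
      (fun x y t ht => by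
        simp only [twoPoint, hper t (hsub ht) x, hper t (hsub ht) y, add_sub_add_right_eq_sub])
      (fun x t ht => by simp only [twoPoint, sub_self, hψ.map_zero t ht, le_refl])
      (fun x y t ht => sub_le_sub_left ((hψ.strictMono ht).monotone (hosc t (hsub ht) y x)) _)
      (hψ.continuousOn.comp (f := fun t => (M, t)) (by fun_prop) fun t ht => ⟨trivial, ht⟩)
      hψ.tendsto_zero hxy hneg
  have hψ_pos : ψ 0 t < ψ (u y' t - u x' t) t := by
    rw [hψ.map_zero t ht]
    exact (sub_pos.2 hxy').trans (sub_neg.1 hW)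
  exact hψ.not_contact hA hu ht (hsub ht) (fun p q x => ha p q x t (hsub ht))
    ⟨(hψ.strictMono ht).lt_iff_lt.1 hψ_pos, hosc t (hsub ht) y' x'⟩ hminy hminx hmint

theorem slope_mul_deriv_le_one (hψ : IsTwoPointBarrier A M P τ ψ ψz ψzz ψt) (hA : 0 ≤ A)
    (hL : 0 < L) (hu : IsClassicalSolution a b T u ut ux uxx)
    (ha : ∀ p q x, ∀ t ∈ Ioo 0 T, P ≤ |p| → A ≤ a p q x t * p ^ 2)
    (hper : ∀ t ∈ Ioo 0 T, Function.Periodic (fun x => u x t) L)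
    (hosc : ∀ t ∈ Ioo 0 T, ∀ x y, u x t - u y t ≤ M) (hτ : τ ∈ Ioo 0 T) (x : ℝ) :
    ψz 0 τ * ux x τ ≤ 1 := by
  have hτ' : τ ∈ Ioc 0 τ := ⟨hτ.1, le_rfl⟩
  have hmin : IsLocalMinOn (fun y => twoPoint ψ u x y τ) (Ici x) x :=
    IsMinOn.localize <| isMinOn_iff.2 fun y hy => by
      simpa [twoPoint, hψ.map_zero τ hτ'] using
        hψ.twoPoint_nonneg hA hL hu ha hper hosc hτ (mem_Ici.1 hy)
  simpa using deriv_nonneg_of_isLocalMinOn_Ici hmin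
    (hψ.hasDerivAt_twoPoint_right hτ' (hu.hasDerivAt_space x τ hτ)).hasDerivWithinAt

theorem slope_mul_abs_deriv_le_one (hψ : IsTwoPointBarrier A M P τ ψ ψz ψzz ψt) (hA : 0 ≤ A)
    (hL : 0 < L) (hu : IsClassicalSolution a b T u ut ux uxx)
    (ha : ∀ p q x, ∀ t ∈ Ioo 0 T, P ≤ |p| → A ≤ a p q x t * p ^ 2)
    (hper : ∀ t ∈ Ioo 0 T, Function.Periodic (fun x => u x t) L)
    (hosc : ∀ t ∈ Ioo 0 T, ∀ x y, u x t - u y t ≤ M) (hτ : τ ∈ Ioo 0 T) (x : ℝ) :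
    ψz 0 τ * |ux x τ| ≤ 1 := by
  have hupper := hψ.slope_mul_deriv_le_one hA hL hu ha hper hosc hτ x
  have hlower := hψ.slope_mul_deriv_le_one hA hL hu.neg
    (fun p q x t ht hp => by simpa using ha (-p) (-q) x t ht (by rwa [abs_neg]))
    (fun t ht x => congrArg Neg.neg (hper t ht x))
    (fun t ht x y => by linarith [hosc t ht y x]) hτ x
  rcases abs_choice (ux x τ) with h | h <;> rwa [h]

end IsTwoPointBarrier

/-- The barrier `ψ(z, t) = exp((α z - β) / t) - exp(-β / t)`, meant for `t > 0`. For `z < β / α` it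
vanishes to infinite order as `t ↓ 0`. -/
noncomputable def expBarrier (α β z t : ℝ) : ℝ :=
  Real.exp ((α * z - β) / t) - Real.exp (-β / t)

lemma hasFDerivAt_affine_div {t : ℝ} (α β z : ℝ) (ht : t ≠ 0) :
    HasFDerivAt (fun q : ℝ × ℝ => (α * q.1 - β) / q.2)
      ((α / t) • ContinuousLinearMap.fst ℝ ℝ ℝ +
        (-(α * z - β) / t ^ 2) • ContinuousLinearMap.snd ℝ ℝ ℝ) (z, t) := by
  have hnum : HasFDerivAt (fun q : ℝ × ℝ => α * q.1 - β) _ (z, t) :=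
    ((hasFDerivAt_fst (𝕜 := ℝ) (p := (z, t))).const_mul α).sub_const β
  have hinv : HasFDerivAt (fun q : ℝ × ℝ => q.2⁻¹) _ (z, t) :=
    HasDerivAt.comp_hasFDerivAt (z, t) (hasDerivAt_inv ht) (hasFDerivAt_snd (𝕜 := ℝ))
  refine (hnum.mul hinv).congr_fderiv ?_
  ext <;> simp <;> ring

lemma hasFDerivAt_expBarrier {t : ℝ} (α β z : ℝ) (ht : t ≠ 0) :
    HasFDerivAt (fun q : ℝ × ℝ => expBarrier α β q.1 q.2)
      ((Real.exp ((α * z - β) / t) * (α / t)) • ContinuousLinearMap.fst ℝ ℝ ℝ +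
        (Real.exp ((α * z - β) / t) * (-(α * z - β) / t ^ 2) - Real.exp (-β / t) * (β / t ^ 2)) •
          ContinuousLinearMap.snd ℝ ℝ ℝ) (z, t) := by
  have hconst : HasFDerivAt (fun q : ℝ × ℝ => -β / q.2)
      ((β / t ^ 2) • ContinuousLinearMap.snd ℝ ℝ ℝ) (z, t) := by
    simpa using hasFDerivAt_affine_div 0 β z ht
  refine ((hasFDerivAt_affine_div α β z ht).exp.sub hconst.exp).congr_fderiv ?_
  ext <;> simp

lemma mul_exp_neg_div_le_one {c γ t : ℝ} (hγ : 0 ≤ γ) (ht : 0 < t) (hc : 2 * c * t ≤ γ ^ 2) :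
    c / t * Real.exp (-γ / t) ≤ 1 := by
  rw [neg_div, Real.exp_neg, ← div_eq_mul_inv, div_le_one (Real.exp_pos _)]
  calc c / t = 2 * c * t / (2 * t ^ 2) := by field_simp
    _ ≤ γ ^ 2 / (2 * t ^ 2) := by gcongr
    _ = (γ / t) ^ 2 / Nat.factorial 2 := by
      rw [div_pow, Nat.factorial_two, Nat.cast_ofNat, div_div, mul_comm]
    _ ≤ Real.exp (γ / t) := Real.pow_div_factorial_le_exp _ (div_nonneg hγ ht.le) 2

theorem isTwoPointBarrier_expBarrier {A M P τ α β : ℝ} (hP : 0 ≤ P) (hα : 0 < α) (hβ : 0 < β)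
    (hMβ : α * M < β) (hβA : β ≤ 2 * A * α ^ 2) (hτ : 2 * (α * P) * τ ≤ (β - α * M) ^ 2) :
    IsTwoPointBarrier A M P τ (expBarrier α β)
      (fun z t => Real.exp ((α * z - β) / t) * (α / t))
      (fun z t => Real.exp ((α * z - β) / t) * (α / t) ^ 2)
      (fun z t => Real.exp ((α * z - β) / t) * (-(α * z - β) / t ^ 2) -
        Real.exp (-β / t) * (β / t ^ 2)) where
  hasFDerivAt z t ht := hasFDerivAt_expBarrier α β z ht.1.ne'
  hasDerivAt_slope z t _ := by
    refine (((((hasDerivAt_id z).const_mul α).sub_const β).div_const t).exp.mul_const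
      (α / t)).congr_deriv ?_
    simp only [id]
    ring
  map_zero t _ := by simp only [expBarrier, mul_zero, zero_sub, sub_self]
  slope_pos z t ht := mul_pos (Real.exp_pos _) (div_pos hα ht.1)
  slope_mul_le_one z hz t ht := by
    have ht₀ : 0 < t := ht.1
    have hle : α * z ≤ α * M := mul_le_mul_of_nonneg_left hz.2 hα.le
    have hsmall : 2 * (α * P) * t ≤ (β - α * M) ^ 2 :=
      (mul_le_mul_of_nonneg_left ht.2 (by positivity)).trans hτ
    calc Real.exp ((α * z - β) / t) * (α / t) * P
        = α * P / t * Real.exp ((α * z - β) / t) := by ring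
      _ ≤ α * P / t * Real.exp (-(β - α * M) / t) := by
        gcongr
        linarith
      _ ≤ 1 := mul_exp_neg_div_le_one (sub_pos.2 hMβ).le ht₀ hsmall
  second_deriv_nonneg z _ t _ := by positivity
  time_deriv_lt z hz t ht := by
    have ht₀ : 0 < t := ht.1
    have hnum : -(α * z - β) < 2 * A * α ^ 2 := by linarith [mul_pos hα hz.1]
    have hconst : 0 < Real.exp (-β / t) * (β / t ^ 2) := by positivity
    calc Real.exp ((α * z - β) / t) * (-(α * z - β) / t ^ 2) - Real.exp (-β / t) * (β / t ^ 2)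
        < Real.exp ((α * z - β) / t) * (-(α * z - β) / t ^ 2) := sub_lt_self _ hconst
      _ ≤ Real.exp ((α * z - β) / t) * (2 * A * α ^ 2 / t ^ 2) := by gcongr
      _ = 2 * A * (Real.exp ((α * z - β) / t) * (α / t) ^ 2) := by ring
  tendsto_zero := by
    have h := (tendsto_exp_neg_div_nhdsGT_zero (sub_pos.2 hMβ)).sub
      (tendsto_exp_neg_div_nhdsGT_zero hβ)
    simpa only [expBarrier, neg_sub, sub_zero] using h

theorem periodic_gradient_estimate_one_dim_general {A M P T L : ℝ} (hM : 0 < M) (hA : 0 < A)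
    (hP : 0 ≤ P) (hL : 0 < L) {a : ℝ → ℝ → ℝ → ℝ → ℝ} {b : ℝ → ℝ → ℝ} {u ut ux uxx : ℝ → ℝ → ℝ}
    (hu : IsClassicalSolution a b T u ut ux uxx)
    (ha : ∀ p q x, ∀ t ∈ Ioo 0 T, P ≤ |p| → A ≤ a p q x t * p ^ 2)
    (hper : ∀ t ∈ Ioo 0 T, Function.Periodic (fun x => u x t) L)
    (hosc : ∀ t ∈ Ioo 0 T, ∀ x y, u x t - u y t ≤ M) (x : ℝ) {t : ℝ} (ht : t ∈ Ioo 0 T)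
    (htP : 2 * A * P * t ≤ M ^ 3) :
    |ux x t| ≤ A / M * t * Real.exp (2 * M ^ 2 / A / t) := by
  -- The barrier has `α = M / A` and `β = 2 α M`: this `β` makes it small for `z ≤ M`, and then
  -- `β ≤ 2 A α²` forces `α ≥ M / A`.
  have hα : 0 < M / A := div_pos hM hA
  have hβ : 0 < 2 * M ^ 2 / A := by positivity
  have hgap : 2 * M ^ 2 / A - M / A * M = M ^ 2 / A := by ring
  have hMβ : M / A * M < 2 * M ^ 2 / A := sub_pos.1 (hgap ▸ by positivity)
  have hβA : 2 * M ^ 2 / A ≤ 2 * A * (M / A) ^ 2 := by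
    apply le_of_eq
    field_simp
  have hshort : 2 * (M / A * P) * t ≤ (2 * M ^ 2 / A - M / A * M) ^ 2 :=
    calc 2 * (M / A * P) * t = M / A ^ 2 * (2 * A * P * t) := by field_simp
      _ ≤ M / A ^ 2 * M ^ 3 := by gcongr
      _ = (2 * M ^ 2 / A - M / A * M) ^ 2 := by rw [hgap]; ring
  have hslope := (isTwoPointBarrier_expBarrier hP hα hβ hMβ hβA hshort).slope_mul_abs_deriv_le_one
    hA.le hL hu ha hper hosc ht x
  simp only [mul_zero, zero_sub, neg_div, Real.exp_neg] at hslope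
  have ht₀ : 0 < t := ht.1
  field_simp at hslope ⊢
  exact hslope

/-- Explicit short-time gradient estimate, independent of the
initial gradient, for periodic solutions of `u_t = a(u_x,u,x,t) u_{xx} + b(u_x)`
under the degeneracy control `a p² ≥ A` for `|p| ≥ P`. -/
theorem periodic_gradient_estimate_one_dim :
    ∀ M A P : ℝ, 0 < M → 0 < A → 0 < P →
    ∃ T' C₁ C₂ : ℝ, 0 < T' ∧ 0 < C₁ ∧ 0 < C₂ ∧
      ∀ (T L : ℝ), 0 < T → 0 < L →
      ∀ (a : ℝ → ℝ → ℝ → ℝ → ℝ) (b : ℝ → ℝ) (u ut ux uxx : ℝ → ℝ → ℝ),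
      ContinuousOn (fun z : ℝ × ℝ × ℝ × ℝ => a z.1 z.2.1 z.2.2.1 z.2.2.2)
        (Set.univ ×ˢ Set.univ ×ˢ Set.univ ×ˢ Set.Icc 0 T) →
      (∀ p q x : ℝ, ∀ t ∈ Set.Icc (0:ℝ) T, 0 < a p q x t) →
      (∀ p q x t : ℝ, a p q (x + L) t = a p q x t) →
      (∀ p q x : ℝ, ∀ t ∈ Set.Icc (0:ℝ) T, P ≤ |p| → A ≤ a p q x t * p ^ 2) →
      Continuous b →
      ContinuousOn (fun z : ℝ × ℝ => u z.1 z.2) (Set.univ ×ˢ Set.Ico 0 T) →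
      (∀ x : ℝ, ∀ t ∈ Set.Ioo (0:ℝ) T, HasDerivAt (fun s => u x s) (ut x t) t) →
      (∀ x : ℝ, ∀ t ∈ Set.Ioo (0:ℝ) T, HasDerivAt (fun y => u y t) (ux x t) x) →
      (∀ x : ℝ, ∀ t ∈ Set.Ioo (0:ℝ) T, HasDerivAt (fun y => ux y t) (uxx x t) x) →
      ContinuousOn (fun z : ℝ × ℝ => ut z.1 z.2) (Set.univ ×ˢ Set.Ioo 0 T) →
      ContinuousOn (fun z : ℝ × ℝ => ux z.1 z.2) (Set.univ ×ˢ Set.Ioo 0 T) →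
      ContinuousOn (fun z : ℝ × ℝ => uxx z.1 z.2) (Set.univ ×ˢ Set.Ioo 0 T) →
      (∀ x : ℝ, ∀ t ∈ Set.Ioo (0:ℝ) T,
        ut x t = a (ux x t) (u x t) x t * uxx x t + b (ux x t)) →
      (∀ x t : ℝ, u (x + L) t = u x t) →
      (∀ t ∈ Set.Ico (0:ℝ) T, ∀ x y : ℝ, u x t - u y t ≤ M) →
      ∀ x : ℝ, ∀ t ∈ Set.Ioo (0:ℝ) (min T T'),
        |ux x t| ≤ C₁ * Real.sqrt t * (1 + t) * Real.exp (C₂ / t) := by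
  intro M A P hM hA hP
  refine ⟨M ^ 3 / (2 * A * P), A / M, 2 * M ^ 2 / A, by positivity, by positivity, by positivity,
    fun T L _ hL a b u ut ux uxx _ _ _ ha _ hu hut hux huxx _ _ _ heq hper hosc x t ht => ?_⟩
  obtain ⟨htT, htT'⟩ := lt_min_iff.1 ht.2
  refine (periodic_gradient_estimate_one_dim_general (b := fun p _ => b p) hM hA hP.le hL
    ⟨hu.mono (prod_mono_right Ioo_subset_Ico_self), hut, hux, huxx, heq⟩
    (fun p q x t ht => ha p q x t (Ioo_subset_Icc_self ht)) (fun t _ x => hper x t)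
    (fun t ht => hosc t (Ioo_subset_Ico_self ht)) x ⟨ht.1, htT⟩
    ((le_div_iff₀' (by positivity)).1 htT'.le)).trans ?_
  rw [mul_assoc (A / M) (√t)]
  gcongr
  exact le_sqrt_mul_one_add ht.1.le
end

section
/- Let Ω = (x₀,x₁) ⊂ ℝ be a bounded open interval, let L, Λ, T > 0 and h ∈ ℝ. Let a : ℝ × ℝ × [x₀,x₁] × [0,T] → ℝ be continuous and positive with a(p,q,x,t) ≤ Λ whenever |p| ≤ L. Let u : [x₀,x₁] × [0,T] → ℝ be continuous, with continuous partial derivatives u_t, u_x, u_{xx} on Ω × (0,T], satisfying u_t = a(u_x,u,x,t)·u_{xx} there, and suppose u(x,0) ≤ L·|x−h| for all x ∈ [x₀,x₁] and u(x,t) ≤ L·|x−h| for x ∈ {x₀,x₁} and all t ∈ [0,T]. Then for all x ∈ [x₀,x₁] and t ∈ (0,T]: u(x,t) ≤ L·(x−h)·erf((x−h)/(2·√(Λt))) + 2L·√(Λt/π)·exp(−(x−h)²/(4Λt)). -/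
/-- The error function `erf s = (2/√π) ∫₀ˢ exp(−y²) dy`. -/
noncomputable def erf (s : ℝ) : ℝ :=
  (2 / Real.sqrt Real.pi) * ∫ y in (0:ℝ)..s, Real.exp (-(y ^ 2))

/-!
Scale the solution of the heat equation on the line with initial values `|y|` to diffusivity `Λ`
and slope `L`. This barrier is convex in space, lies above the cone `L |x - h|` and has slope at
most `L`. Hence, where the solution and the barrier have the same slope, the diffusivity `a` is at
most `Λ`, and the barrier is a supersolution there; by convexity it does not matter that `a` may be
smaller than `Λ`. The maximum principle only tests points with equal slopes, so it bounds the
solution by the barrier. The barrier is started at a small positive time, because its formula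
degenerates at time zero, and this delay is removed in the limit.
-/

open Filter Set
open scoped Real Topology

theorem hasDerivAt_erf (s : ℝ) : HasDerivAt erf (2 / √π * Real.exp (-(s ^ 2))) s := by
  have hcont : Continuous fun y : ℝ => Real.exp (-(y ^ 2)) := by fun_prop
  exact (hcont.integral_hasStrictDerivAt 0 s).hasDerivAt.const_mul _

theorem erf_neg (s : ℝ) : erf (-s) = -erf s := by
  have hreflect := intervalIntegral.integral_comp_neg (a := 0) (b := s)
    (fun y : ℝ => Real.exp (-(y ^ 2)))
  simp only [neg_sq, neg_zero] at hreflect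
  rw [erf, erf, intervalIntegral.integral_symm, ← hreflect, mul_neg]

theorem monotone_erf : Monotone erf :=
  monotone_of_hasDerivAt_nonneg hasDerivAt_erf fun s => by positivity

theorem tendsto_erf_atTop : Tendsto erf atTop (𝓝 1) := by
  have hint : MeasureTheory.IntegrableOn (fun y : ℝ => Real.exp (-(y ^ 2))) (Ioi 0) := by
    simpa using (integrable_exp_neg_mul_sq one_pos).integrableOn (s := Ioi (0 : ℝ))
  have hgauss : ∫ y in Ioi (0 : ℝ), Real.exp (-(y ^ 2)) = √π / 2 := by
    simpa using integral_gaussian_Ioi 1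
  have hlim := (MeasureTheory.intervalIntegral_tendsto_integral_Ioi 0 hint tendsto_id).const_mul
    (2 / √π)
  have hnorm : 2 / √π * (√π / 2) = 1 := by field_simp
  rwa [hgauss, hnorm] at hlim

theorem erf_le_one (s : ℝ) : erf s ≤ 1 :=
  monotone_erf.ge_of_tendsto tendsto_erf_atTop s

theorem abs_erf_le_one (s : ℝ) : |erf s| ≤ 1 :=
  abs_le'.2 ⟨erf_le_one s, erf_neg s ▸ erf_le_one (-s)⟩

/-- The primitive of `erf` that is asymptotic to `|z|` at infinity. -/
noncomputable def erfPrimitive (z : ℝ) : ℝ :=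
  z * erf z + Real.exp (-(z ^ 2)) / √π

theorem hasDerivAt_exp_neg_sq (z : ℝ) :
    HasDerivAt (fun z : ℝ => Real.exp (-(z ^ 2))) (Real.exp (-(z ^ 2)) * -(2 * z)) z := by
  simpa using (hasDerivAt_pow 2 z).fun_neg.exp

theorem hasDerivAt_erfPrimitive (z : ℝ) : HasDerivAt erfPrimitive (erf z) z := by
  refine (((hasDerivAt_id z).mul (hasDerivAt_erf z)).add
    ((hasDerivAt_exp_neg_sq z).div_const √π)).congr_deriv ?_
  simp only [id]
  ring

theorem continuous_erfPrimitive : Continuous erfPrimitive :=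
  continuous_iff_continuousAt.2 fun z => (hasDerivAt_erfPrimitive z).continuousAt

theorem erfPrimitive_neg (z : ℝ) : erfPrimitive (-z) = erfPrimitive z := by
  simp only [erfPrimitive, erf_neg, neg_mul_neg, neg_sq]

theorem le_erfPrimitive (z : ℝ) : z ≤ erfPrimitive z := by
  -- With the factor `z` frozen, `erfPrimitive` decreases on `[z, ∞)` to the limit `z`.
  let g : ℝ → ℝ := fun s => z * erf s + Real.exp (-(s ^ 2)) / √π
  have hderiv (s : ℝ) : HasDerivAt g (2 / √π * Real.exp (-(s ^ 2)) * (z - s)) s := by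
    refine (((hasDerivAt_erf s).const_mul z).add
      ((hasDerivAt_exp_neg_sq s).div_const √π)).congr_deriv ?_
    ring
  have hanti : AntitoneOn g (Ici z) := by
    refine antitoneOn_of_hasDerivWithinAt_nonpos (convex_Ici z)
      (fun s _ => (hderiv s).continuousAt.continuousWithinAt)
      (fun s _ => (hderiv s).hasDerivWithinAt) fun s hs => ?_
    rw [interior_Ici] at hs
    exact mul_nonpos_of_nonneg_of_nonpos (by positivity) (sub_nonpos.2 hs.le)
  have hlim : Tendsto (fun s => z * erf s) atTop (𝓝 z) := by
    simpa using tendsto_erf_atTop.const_mul z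
  refine le_of_tendsto hlim ?_
  filter_upwards [eventually_ge_atTop z] with s hs
  calc z * erf s ≤ g s := le_add_of_nonneg_right (by positivity)
    _ ≤ g z := hanti self_mem_Ici hs hs

theorem abs_le_erfPrimitive (z : ℝ) : |z| ≤ erfPrimitive z :=
  abs_le'.2 ⟨le_erfPrimitive z, erfPrimitive_neg z ▸ le_erfPrimitive (-z)⟩

/-- The fundamental solution `exp (-y² / (4τ)) / √(4πτ)` of the heat equation on the line. The
formula is written in the similarity variable `y / (2√τ)`. -/
noncomputable def heatKernel (y τ : ℝ) : ℝ :=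
  Real.exp (-((y / (2 * √τ)) ^ 2)) / (√π * (2 * √τ))

theorem heatKernel_nonneg (y τ : ℝ) : 0 ≤ heatKernel y τ := by
  unfold heatKernel
  positivity

/-- The solution of the heat equation on the line with initial values `|y|`. The formula is for
`0 < τ` only: at `τ = 0` division by zero makes it `0`. -/
noncomputable def heatCone (y τ : ℝ) : ℝ :=
  2 * √τ * erfPrimitive (y / (2 * √τ))

theorem heatCone_eq (y : ℝ) {τ : ℝ} (hτ : 0 < τ) :
    heatCone y τ = y * erf (y / (2 * √τ)) + 2 * √(τ / π) * Real.exp (-y ^ 2 / (4 * τ)) := by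
  have hexp : -(y / (2 * √τ)) ^ 2 = -y ^ 2 / (4 * τ) := by
    rw [div_pow, mul_pow, Real.sq_sqrt hτ.le, neg_div]
    norm_num
  rw [heatCone, erfPrimitive, hexp, Real.sqrt_div hτ.le]
  field_simp

theorem abs_le_heatCone (y : ℝ) {τ : ℝ} (hτ : 0 < τ) : |y| ≤ heatCone y τ := by
  have hr : 0 < 2 * √τ := by positivity
  calc |y| = 2 * √τ * |y / (2 * √τ)| := by rw [abs_div, abs_of_pos hr, mul_div_cancel₀ _ hr.ne']
    _ ≤ heatCone y τ := mul_le_mul_of_nonneg_left (abs_le_erfPrimitive _) hr.le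

theorem hasDerivAt_heatCone_space (y : ℝ) {τ : ℝ} (hτ : 0 < τ) :
    HasDerivAt (fun y => heatCone y τ) (erf (y / (2 * √τ))) y := by
  have hscale : HasDerivAt (fun y : ℝ => y / (2 * √τ)) (1 / (2 * √τ)) y :=
    (hasDerivAt_id y).div_const _
  refine (((hasDerivAt_erfPrimitive _).comp y hscale).const_mul (2 * √τ)).congr_deriv ?_
  field_simp

theorem hasDerivAt_erf_div (y τ : ℝ) :
    HasDerivAt (fun y => erf (y / (2 * √τ))) (2 * heatKernel y τ) y := by
  have hscale : HasDerivAt (fun y : ℝ => y / (2 * √τ)) (1 / (2 * √τ)) y :=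
    (hasDerivAt_id y).div_const _
  refine ((hasDerivAt_erf _).comp y hscale).congr_deriv ?_
  rw [heatKernel]
  ring

theorem hasDerivAt_heatCone_time (y : ℝ) {τ : ℝ} (hτ : 0 < τ) :
    HasDerivAt (fun τ => heatCone y τ) (2 * heatKernel y τ) τ := by
  have hr : HasDerivAt (fun τ : ℝ => 2 * √τ) (2 * (1 / (2 * √τ))) τ :=
    (Real.hasDerivAt_sqrt hτ.ne').const_mul 2
  have hscale := (hasDerivAt_const τ y).fun_div hr (by positivity)
  refine (hr.mul ((hasDerivAt_erfPrimitive _).comp τ hscale)).congr_deriv ?_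
  simp only [Function.comp_apply, erfPrimitive, heatKernel]
  field_simp
  ring

theorem continuousOn_heatCone :
    ContinuousOn (fun z : ℝ × ℝ => heatCone z.1 z.2) {z | 0 < z.2} := by
  have hscale : ContinuousOn (fun z : ℝ × ℝ => z.1 / (2 * √z.2)) {z | 0 < z.2} :=
    continuousOn_fst.div (by fun_prop) fun z (hz : 0 < z.2) => by positivity
  exact ContinuousOn.mul (by fun_prop) (continuous_erfPrimitive.comp_continuousOn hscale)

theorem second_deriv_nonpos_of_isLocalMax {f f' : ℝ → ℝ} {f'' c : ℝ} (hmax : IsLocalMax f c)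
    (hf : ∀ᶠ y in 𝓝 c, HasDerivAt f (f' y) y) (hf' : HasDerivAt f' f'' c) : f'' ≤ 0 := by
  by_contra! hpos
  -- Otherwise `c` is also a local minimum, so `f` is locally constant near `c`.
  have hderiv : deriv f =ᶠ[𝓝 c] f' := hf.mono fun y hy => hy.deriv
  have hderiv₂ : deriv (deriv f) c = f'' := hderiv.deriv_eq.trans hf'.deriv
  have hmin : IsLocalMin f c := isLocalMin_of_deriv_deriv_pos (hderiv₂ ▸ hpos)
    hmax.deriv_eq_zero hf.self_of_nhds.continuousAt
  have hconst : f =ᶠ[𝓝 c] fun _ => f c := by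
    filter_upwards [hmax, hmin] with y hle hge using le_antisymm hle hge
  have hzero : deriv (deriv f) c = 0 := by simpa using hconst.deriv.deriv_eq
  exact hpos.ne' (hderiv₂ ▸ hzero)

theorem deriv_nonneg_of_isLocalMaxOn_of_segment_subset {f : ℝ → ℝ} {f' b t : ℝ} {s : Set ℝ}
    (hmax : IsLocalMaxOn f s t) (hf : HasDerivWithinAt f f' s t) (hbt : b < t)
    (hs : segment ℝ t b ⊆ s) : 0 ≤ f' := by
  have hdir := hmax.hasFDerivWithinAt_nonpos hf.hasFDerivWithinAt
    (sub_mem_posTangentConeAt_of_segment_subset hs)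
  simp only [ContinuousLinearMap.toSpanSingleton_apply, smul_eq_mul] at hdir
  exact nonneg_of_mul_nonpos_right hdir (sub_neg.2 hbt)

/-- Regularity of a classical solution of a second order parabolic equation on
`[x₀, x₁] × [0, T]`: continuity up to the boundary, and pointwise derivatives `wt`, `wx`, `wxx`
in `(x₀, x₁) × (0, T]`. The time derivative is taken within `(0, T]`, so it is one-sided at `T`. -/
structure HasParabolicDerivs (x₀ x₁ T : ℝ) (w wt wx wxx : ℝ → ℝ → ℝ) : Prop where
  continuousOn : ContinuousOn (fun z : ℝ × ℝ => w z.1 z.2) (Icc x₀ x₁ ×ˢ Icc 0 T)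
  time : ∀ x ∈ Ioo x₀ x₁, ∀ t ∈ Ioc 0 T,
    HasDerivWithinAt (fun s => w x s) (wt x t) (Ioc 0 T) t
  space : ∀ x ∈ Ioo x₀ x₁, ∀ t ∈ Ioc 0 T, HasDerivAt (fun y => w y t) (wx x t) x
  space_space : ∀ x ∈ Ioo x₀ x₁, ∀ t ∈ Ioc 0 T, HasDerivAt (fun y => wx y t) (wxx x t) x

section Parabolic

variable {x₀ x₁ T : ℝ} {u ut ux uxx v vt vx vxx : ℝ → ℝ → ℝ}

theorem HasParabolicDerivs.sub (hu : HasParabolicDerivs x₀ x₁ T u ut ux uxx)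
    (hv : HasParabolicDerivs x₀ x₁ T v vt vx vxx) :
    HasParabolicDerivs x₀ x₁ T (fun x t => u x t - v x t) (fun x t => ut x t - vt x t)
      (fun x t => ux x t - vx x t) (fun x t => uxx x t - vxx x t) where
  continuousOn := hu.continuousOn.sub hv.continuousOn
  time x hx t ht := (hu.time x hx t ht).sub (hv.time x hx t ht)
  space x hx t ht := (hu.space x hx t ht).sub (hv.space x hx t ht)
  space_space x hx t ht := (hu.space_space x hx t ht).sub (hv.space_space x hx t ht)

theorem HasParabolicDerivs.sub_mul_time (hu : HasParabolicDerivs x₀ x₁ T u ut ux uxx) (ε : ℝ) :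
    HasParabolicDerivs x₀ x₁ T (fun x t => u x t - ε * t) (fun x t => ut x t - ε) ux uxx where
  continuousOn := hu.continuousOn.sub (by fun_prop)
  time x hx t ht := (hu.time x hx t ht).sub (by simpa using (hasDerivWithinAt_id t _).const_mul ε)
  space x hx t ht := (hu.space x hx t ht).sub_const _
  space_space := hu.space_space

theorem HasParabolicDerivs.derivs_of_isMaxOn {c s : ℝ}
    (hu : HasParabolicDerivs x₀ x₁ T u ut ux uxx) (hc : c ∈ Ioo x₀ x₁) (hs : s ∈ Ioc 0 T)
    (hmax : IsMaxOn (fun z : ℝ × ℝ => u z.1 z.2) (Icc x₀ x₁ ×ˢ Icc 0 T) (c, s)) :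
    ux c s = 0 ∧ uxx c s ≤ 0 ∧ 0 ≤ ut c s := by
  have hnhds : Ioo x₀ x₁ ∈ 𝓝 c := isOpen_Ioo.mem_nhds hc
  have hmax_space : IsLocalMax (fun y => u y s) c := by
    filter_upwards [hnhds] with y hy
    exact hmax (mk_mem_prod (Ioo_subset_Icc_self hy) (Ioc_subset_Icc_self hs))
  have hmax_time : IsMaxOn (fun t => u c t) (Ioc 0 T) s := fun t ht =>
    hmax (mk_mem_prod (Ioo_subset_Icc_self hc) (Ioc_subset_Icc_self ht))
  refine ⟨hmax_space.hasDerivAt_eq_zero (hu.space c hc s hs), ?_, ?_⟩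
  · exact second_deriv_nonpos_of_isLocalMax hmax_space
      (eventually_of_mem hnhds fun y hy => hu.space y hy s hs) (hu.space_space c hc s hs)
  · exact deriv_nonneg_of_isLocalMaxOn_of_segment_subset hmax_time.localize (hu.time c hc s hs)
      (half_lt_self hs.1)
      ((convex_Ioc 0 T).segment_subset hs ⟨half_pos hs.1, (half_le_self hs.1.le).trans hs.2⟩)

theorem parabolic_maximum_principle {M : ℝ} (hu : HasParabolicDerivs x₀ x₁ T u ut ux uxx)
    (hsub : ∀ x ∈ Ioo x₀ x₁, ∀ t ∈ Ioc 0 T, ux x t = 0 → uxx x t ≤ 0 → ut x t ≤ 0)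
    (hinit : ∀ x ∈ Icc x₀ x₁, u x 0 ≤ M)
    (hbdry : ∀ x ∈ ({x₀, x₁} : Set ℝ), ∀ t ∈ Icc 0 T, u x t ≤ M) :
    ∀ x ∈ Icc x₀ x₁, ∀ t ∈ Icc 0 T, u x t ≤ M := by
  intro x hx t ht
  by_contra! hM
  -- Tilting by `-ε t` makes the time derivative strictly negative at an interior critical point.
  obtain ⟨ε, hε, hεt⟩ := exists_pos_mul_lt (sub_pos.2 hM) t
  have htilt := hu.sub_mul_time ε
  obtain ⟨⟨c, s⟩, ⟨hc, hs⟩, hmax⟩ := (isCompact_Icc.prod isCompact_Icc).exists_isMaxOn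
    ⟨(x, t), hx, ht⟩ htilt.continuousOn
  have hcs : M < u c s := by
    have hle : u x t - ε * t ≤ u c s - ε * s := hmax (mk_mem_prod hx ht)
    linarith [mul_nonneg hε.le hs.1]
  have hs_pos : s ∈ Ioc 0 T := by
    refine ⟨hs.1.lt_of_ne' ?_, hs.2⟩
    rintro rfl
    exact hcs.not_ge (hinit c hc)
  have hc_interior : c ∈ Ioo x₀ x₁ := by
    by_contra hc_boundary
    have hc_endpoint : c ∈ ({x₀, x₁} : Set ℝ) := by
      rw [← Icc_sdiff_Ioo_same (hc.1.trans hc.2)]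
      exact ⟨hc, hc_boundary⟩
    exact hcs.not_ge (hbdry c hc_endpoint s hs)
  obtain ⟨hux, huxx, hut⟩ := htilt.derivs_of_isMaxOn hc_interior hs_pos hmax
  linarith [hsub c hc_interior s hs_pos hux huxx]

theorem parabolic_comparison (hu : HasParabolicDerivs x₀ x₁ T u ut ux uxx)
    (hv : HasParabolicDerivs x₀ x₁ T v vt vx vxx)
    (hcomp : ∀ x ∈ Ioo x₀ x₁, ∀ t ∈ Ioc 0 T,
      ux x t = vx x t → uxx x t ≤ vxx x t → ut x t ≤ vt x t)
    (hinit : ∀ x ∈ Icc x₀ x₁, u x 0 ≤ v x 0)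
    (hbdry : ∀ x ∈ ({x₀, x₁} : Set ℝ), ∀ t ∈ Icc 0 T, u x t ≤ v x t) :
    ∀ x ∈ Icc x₀ x₁, ∀ t ∈ Icc 0 T, u x t ≤ v x t := by
  simpa only [sub_nonpos] using parabolic_maximum_principle (M := 0) (hu.sub hv)
    (by simpa only [sub_nonpos, sub_eq_zero] using hcomp)
    (by simpa only [sub_nonpos] using hinit) (by simpa only [sub_nonpos] using hbdry)

theorem hasParabolicDerivs_heatCone {Λ ε : ℝ} (x₀ x₁ T L h : ℝ) (hΛ : 0 ≤ Λ) (hε : 0 < ε) :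
    HasParabolicDerivs x₀ x₁ T (fun x t => L * heatCone (x - h) (Λ * t + ε))
      (fun x t => Λ * (L * (2 * heatKernel (x - h) (Λ * t + ε))))
      (fun x t => L * erf ((x - h) / (2 * √(Λ * t + ε))))
      (fun x t => L * (2 * heatKernel (x - h) (Λ * t + ε))) where
  continuousOn := continuousOn_const.mul <| continuousOn_heatCone.comp
    (f := fun z : ℝ × ℝ => (z.1 - h, Λ * z.2 + ε)) (by fun_prop)
    fun z hz => add_pos_of_nonneg_of_pos (mul_nonneg hΛ hz.2.1) hε
  time x _ t ht := by
    have hclock : HasDerivAt (fun t => Λ * t + ε) Λ t := by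
      simpa using ((hasDerivAt_id t).const_mul Λ).add_const ε
    have hpos : 0 < Λ * t + ε := add_pos_of_nonneg_of_pos (mul_nonneg hΛ ht.1.le) hε
    have hchain := (hasDerivAt_heatCone_time (x - h) hpos).comp t hclock
    exact ((hchain.const_mul L).congr_deriv (by ring)).hasDerivWithinAt
  space x _ t ht := by
    have hpos : 0 < Λ * t + ε := add_pos_of_nonneg_of_pos (mul_nonneg hΛ ht.1.le) hε
    exact ((hasDerivAt_heatCone_space (x - h) hpos).comp_sub_const x h).const_mul L
  space_space x _ t _ := ((hasDerivAt_erf_div (x - h) _).comp_sub_const x h).const_mul L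

variable {L Λ h : ℝ} {a : ℝ → ℝ → ℝ → ℝ → ℝ}

theorem le_mul_heatCone_add {ε : ℝ} (hL : 0 ≤ L) (hΛ : 0 ≤ Λ) (hε : 0 < ε)
    (ha : ∀ p q : ℝ, ∀ x ∈ Ioo x₀ x₁, ∀ t ∈ Ioc 0 T, |p| ≤ L → a p q x t ∈ Icc 0 Λ)
    (hu : HasParabolicDerivs x₀ x₁ T u ut ux uxx)
    (hpde : ∀ x ∈ Ioo x₀ x₁, ∀ t ∈ Ioc 0 T, ut x t ≤ a (ux x t) (u x t) x t * uxx x t)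
    (hinit : ∀ x ∈ Icc x₀ x₁, u x 0 ≤ L * |x - h|)
    (hbdry : ∀ x ∈ ({x₀, x₁} : Set ℝ), ∀ t ∈ Icc 0 T, u x t ≤ L * |x - h|) :
    ∀ x ∈ Icc x₀ x₁, ∀ t ∈ Icc 0 T, u x t ≤ L * heatCone (x - h) (Λ * t + ε) := by
  have hcone (x t : ℝ) (ht : 0 ≤ t) : L * |x - h| ≤ L * heatCone (x - h) (Λ * t + ε) :=
    mul_le_mul_of_nonneg_left (abs_le_heatCone _ (by positivity)) hL
  refine parabolic_comparison hu (hasParabolicDerivs_heatCone x₀ x₁ T L h hΛ hε) ?_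
    (fun x hx => (hinit x hx).trans (hcone x 0 le_rfl))
    (fun x hx t ht => (hbdry x hx t ht).trans (hcone x t ht.1))
  intro x hx t ht hslope hcurv
  have hux : |ux x t| ≤ L := by
    rw [hslope, abs_mul, abs_of_nonneg hL]
    exact mul_le_of_le_one_right hL (abs_erf_le_one _)
  obtain ⟨ha_nonneg, ha_le⟩ := ha (ux x t) (u x t) x hx t ht hux
  have hconvex : 0 ≤ L * (2 * heatKernel (x - h) (Λ * t + ε)) :=
    mul_nonneg hL (mul_nonneg zero_le_two (heatKernel_nonneg _ _))
  calc ut x t ≤ a (ux x t) (u x t) x t * uxx x t := hpde x hx t ht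
    _ ≤ a (ux x t) (u x t) x t * (L * (2 * heatKernel (x - h) (Λ * t + ε))) :=
      mul_le_mul_of_nonneg_left hcurv ha_nonneg
    _ ≤ Λ * (L * (2 * heatKernel (x - h) (Λ * t + ε))) :=
      mul_le_mul_of_nonneg_right ha_le hconvex

theorem displacement_estimate_lipschitz_general (hL : 0 ≤ L) (hΛ : 0 < Λ)
    (ha : ∀ p q : ℝ, ∀ x ∈ Ioo x₀ x₁, ∀ t ∈ Ioc 0 T, |p| ≤ L → a p q x t ∈ Icc 0 Λ)
    (hu : HasParabolicDerivs x₀ x₁ T u ut ux uxx)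
    (hpde : ∀ x ∈ Ioo x₀ x₁, ∀ t ∈ Ioc 0 T, ut x t ≤ a (ux x t) (u x t) x t * uxx x t)
    (hinit : ∀ x ∈ Icc x₀ x₁, u x 0 ≤ L * |x - h|)
    (hbdry : ∀ x ∈ ({x₀, x₁} : Set ℝ), ∀ t ∈ Icc 0 T, u x t ≤ L * |x - h|) :
    ∀ x ∈ Icc x₀ x₁, ∀ t ∈ Ioc 0 T,
      u x t ≤ L * (x - h) * erf ((x - h) / (2 * √(Λ * t)))
        + 2 * L * √(Λ * t / π) * Real.exp (-(x - h) ^ 2 / (4 * Λ * t)) := by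
  intro x hx t ht
  have hΛt : 0 < Λ * t := mul_pos hΛ ht.1
  have hlim : Tendsto (fun τ => L * heatCone (x - h) τ) (𝓝[>] (Λ * t))
      (𝓝 (L * heatCone (x - h) (Λ * t))) :=
    ((hasDerivAt_heatCone_time (x - h) hΛt).continuousAt.const_mul L).mono_left nhdsWithin_le_nhds
  have hle : u x t ≤ L * heatCone (x - h) (Λ * t) := by
    refine ge_of_tendsto hlim ?_
    filter_upwards [self_mem_nhdsWithin] with τ hτ
    simpa using le_mul_heatCone_add hL hΛ.le (sub_pos.2 hτ) ha hu hpde hinit hbdry x hx t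
      (Ioc_subset_Icc_self ht)
  refine hle.trans_eq ?_
  rw [heatCone_eq _ hΛt, mul_assoc 4]
  ring

end Parabolic

/-- Displacement estimate for a solution whose initial and
lateral boundary data lie below the cone `L·|x−h|`. -/
theorem displacement_estimate_lipschitz
    (x₀ x₁ L Λ T h : ℝ) (hx : x₀ < x₁) (hL : 0 < L) (hΛ : 0 < Λ) (hT : 0 < T)
    (a : ℝ → ℝ → ℝ → ℝ → ℝ)
    (ha_cont : ContinuousOn (fun z : ℝ × ℝ × ℝ × ℝ => a z.1 z.2.1 z.2.2.1 z.2.2.2)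
      (Set.univ ×ˢ Set.univ ×ˢ Set.Icc x₀ x₁ ×ˢ Set.Icc 0 T))
    (ha_pos : ∀ p q : ℝ, ∀ x ∈ Set.Icc x₀ x₁, ∀ t ∈ Set.Icc (0:ℝ) T, 0 < a p q x t)
    (ha_ub : ∀ p q : ℝ, ∀ x ∈ Set.Icc x₀ x₁, ∀ t ∈ Set.Icc (0:ℝ) T,
      |p| ≤ L → a p q x t ≤ Λ)
    (u ut ux uxx : ℝ → ℝ → ℝ)
    (hu_cont : ContinuousOn (fun z : ℝ × ℝ => u z.1 z.2) (Set.Icc x₀ x₁ ×ˢ Set.Icc 0 T))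
    (hut : ∀ x ∈ Set.Ioo x₀ x₁, ∀ t ∈ Set.Ioc (0:ℝ) T,
      HasDerivWithinAt (fun s => u x s) (ut x t) (Set.Ioc 0 T) t)
    (hux : ∀ x ∈ Set.Ioo x₀ x₁, ∀ t ∈ Set.Ioc (0:ℝ) T,
      HasDerivAt (fun y => u y t) (ux x t) x)
    (huxx : ∀ x ∈ Set.Ioo x₀ x₁, ∀ t ∈ Set.Ioc (0:ℝ) T,
      HasDerivAt (fun y => ux y t) (uxx x t) x)
    (hut_cont : ContinuousOn (fun z : ℝ × ℝ => ut z.1 z.2) (Set.Ioo x₀ x₁ ×ˢ Set.Ioc 0 T))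
    (hux_cont : ContinuousOn (fun z : ℝ × ℝ => ux z.1 z.2) (Set.Ioo x₀ x₁ ×ˢ Set.Ioc 0 T))
    (huxx_cont : ContinuousOn (fun z : ℝ × ℝ => uxx z.1 z.2) (Set.Ioo x₀ x₁ ×ˢ Set.Ioc 0 T))
    (hpde : ∀ x ∈ Set.Ioo x₀ x₁, ∀ t ∈ Set.Ioc (0:ℝ) T,
      ut x t = a (ux x t) (u x t) x t * uxx x t)
    (hinit : ∀ x ∈ Set.Icc x₀ x₁, u x 0 ≤ L * |x - h|)
    (hbdry : ∀ x ∈ ({x₀, x₁} : Set ℝ), ∀ t ∈ Set.Icc (0:ℝ) T, u x t ≤ L * |x - h|) :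
    ∀ x ∈ Set.Icc x₀ x₁, ∀ t ∈ Set.Ioc (0:ℝ) T,
      u x t ≤ L * (x - h) * erf ((x - h) / (2 * Real.sqrt (Λ * t)))
        + 2 * L * Real.sqrt (Λ * t / Real.pi) * Real.exp (-(x - h) ^ 2 / (4 * Λ * t)) :=
  displacement_estimate_lipschitz_general hL.le hΛ
    (fun p q x hx t ht hp =>
      ⟨(ha_pos p q x (Ioo_subset_Icc_self hx) t (Ioc_subset_Icc_self ht)).le,
        ha_ub p q x (Ioo_subset_Icc_self hx) t (Ioc_subset_Icc_self ht) hp⟩)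
    ⟨hu_cont, hut, hux, huxx⟩ (fun x hx t ht => (hpde x hx t ht).le) hinit hbdry
end
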